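/- arXiv:2010.04662 — 2 statements merged into one kernel-verified Lean document; each statement's English description precedes it below -/
import Mathlib

section
/- Let K be a field, s ∈ ℤ^n, and let P ∈ K[x]^{n×n} be in s-reduced form. Then det(P) is nonzero and its leading coefficient equals det(lm_s(P)). In particular, if P is in s-weak Popov form, then the leading coefficient of det(P) equals the product of the leading coefficients of the diagonal entries of P. -/
open Polynomial Matrix

/-- The degree of a polynomial, viewed in `ℤ ∪ {-∞}`. -/
noncomputable def degZ {K : Type*} [Field K] (p : K[X]) : WithBot ℤ :=
  p.degree.map fun a : ℕ => (a : ℤ)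

/-- The `s`-row degree of a (row) vector of polynomials. -/
noncomputable def rdegRow {K : Type*} [Field K] {ν : Type*} [Fintype ν]
    (s : ν → ℤ) (v : ν → K[X]) : WithBot ℤ :=
  Finset.univ.sup fun j => degZ (v j) + (s j : WithBot ℤ)

/-- The `s`-row degree of a polynomial matrix. -/
noncomputable def rdeg {K : Type*} [Field K] {ι ν : Type*} [Fintype ν]
    (s : ν → ℤ) (P : Matrix ι ν K[X]) : ι → WithBot ℤ :=
  fun i => rdegRow s (P i)

/-- The `t`-column degree of a polynomial matrix. -/
noncomputable def cdeg {K : Type*} [Field K] {ι ν : Type*} [Fintype ι]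
    (t : ι → ℤ) (P : Matrix ι ν K[X]) : ν → WithBot ℤ :=
  fun j => Finset.univ.sup fun i => degZ (P i j) + (t i : WithBot ℤ)

/-- Coefficient of integer degree `d` of a polynomial (0 if `d < 0`). -/
noncomputable def coeffZ {K : Type*} [Field K] (p : K[X]) (d : ℤ) : K :=
  if 0 ≤ d then p.coeff d.toNat else 0

/-- The `s`-leading matrix of a polynomial matrix. -/
noncomputable def lm {K : Type*} [Field K] {ι ν : Type*} [Fintype ν]
    (s : ν → ℤ) (P : Matrix ι ν K[X]) : Matrix ι ν K :=
  Matrix.of fun i j =>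
    (rdeg s P i).recBotCoe 0 fun t => coeffZ (P i j) (t - s j)

/-- `P` is in `s`-reduced form: its `s`-leading matrix has full row rank,
i.e. its rows are linearly independent over `K`. -/
def IsReducedForm {K : Type*} [Field K] {ι ν : Type*} [Fintype ν]
    (s : ν → ℤ) (P : Matrix ι ν K[X]) : Prop :=
  LinearIndependent K fun i => lm s P i

open Classical in
/-- The `s`-pivot index of a row vector: the largest column index where the
`s`-row degree is attained (with a nonzero entry); `⊥` for the zero row. -/
noncomputable def piv {K : Type*} [Field K] {ν : Type*} [Fintype ν] [LinearOrder ν]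
    (s : ν → ℤ) (v : ν → K[X]) : WithBot ν :=
  (Finset.univ.filter fun j => v j ≠ 0 ∧ degZ (v j) + (s j : WithBot ℤ) = rdegRow s v).max

/-- The `s`-pivot degree of a row vector (junk value `0` for the zero row). -/
noncomputable def pivDeg {K : Type*} [Field K] {ν : Type*} [Fintype ν] [LinearOrder ν]
    (s : ν → ℤ) (v : ν → K[X]) : ℕ :=
  ((piv s v).map fun j => (v j).natDegree).unbotD 0

/-- `P` is in `s`-weak Popov form: no zero row and strictly increasing `s`-pivot indices. -/
def IsWeakPopov {K : Type*} [Field K] {ι ν : Type*} [Fintype ν] [LinearOrder ν] [Preorder ι]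
    (s : ν → ℤ) (P : Matrix ι ν K[X]) : Prop :=
  (∀ i, piv s (P i) ≠ ⊥) ∧ StrictMono fun i => piv s (P i)

/-- `P` is in `s`-unordered weak Popov form: no zero row and pairwise distinct
`s`-pivot indices. -/
def IsUWeakPopov {K : Type*} [Field K] {ι ν : Type*} [Fintype ν] [LinearOrder ν]
    (s : ν → ℤ) (P : Matrix ι ν K[X]) : Prop :=
  (∀ i, piv s (P i) ≠ ⊥) ∧ Function.Injective fun i => piv s (P i)

/-- `P` is in `s`-Popov form: `s`-weak Popov, monic pivots, and each pivot entry
has degree strictly larger than the other entries of its column. -/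
def IsPopov {K : Type*} [Field K] {ι ν : Type*} [Fintype ν] [LinearOrder ν] [Preorder ι]
    (s : ν → ℤ) (P : Matrix ι ν K[X]) : Prop :=
  IsWeakPopov s P ∧
    ∀ i (j : ν), piv s (P i) = (j : WithBot ν) →
      (P i j).Monic ∧ ∀ i', i' ≠ i → (P i' j).degree < (P i j).degree

/-- The row space of a polynomial matrix. -/
noncomputable def rowSpace {K : Type*} [Field K] {ι ν : Type*} (P : Matrix ι ν K[X]) :
    Submodule K[X] (ν → K[X]) :=
  Submodule.span K[X] (Set.range fun i => P i)

/-- The rows of `B` form a basis of the module `M`. -/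
def IsBasisOf {K : Type*} [Field K] {ι ν : Type*} (B : Matrix ι ν K[X])
    (M : Submodule K[X] (ν → K[X])) : Prop :=
  LinearIndependent K[X] (fun i => B i) ∧
    Submodule.span K[X] (Set.range fun i => B i) = M

/-- The left kernel of a polynomial matrix. -/
noncomputable def leftKernel {K : Type*} [Field K] {ι ν : Type*} [Fintype ι]
    (F : Matrix ι ν K[X]) : Submodule K[X] (ι → K[X]) :=
  LinearMap.ker F.vecMulLinear

/-- `p` has degree at most the integer `d`. -/
def DegLeZ {K : Type*} [Field K] (p : K[X]) (d : ℤ) : Prop :=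
  ∀ m : ℕ, d < m → p.coeff m = 0

theorem DegLeZ.eq_zero {K : Type*} [Field K] {p : K[X]} {d : ℤ} (h : DegLeZ p d) (hd : d < 0) :
    p = 0 := by
  ext m
  simpa using h m (by omega)

theorem DegLeZ.natDegree_le {K : Type*} [Field K] {p : K[X]} {d : ℤ} (h : DegLeZ p d) :
    p.natDegree ≤ d.toNat := by
  rw [Polynomial.natDegree_le_iff_coeff_eq_zero]
  intro m hm
  exact h m (by omega)

theorem DegLeZ.mul {K : Type*} [Field K] {p q : K[X]} {d e : ℤ} (hp : DegLeZ p d)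
    (hq : DegLeZ q e) :
    DegLeZ (p * q) (d + e) ∧ coeffZ (p * q) (d + e) = coeffZ p d * coeffZ q e := by
  by_cases hd : d < 0
  · rw [hp.eq_zero hd]
    simp [DegLeZ, coeffZ]
  by_cases he : e < 0
  · rw [hq.eq_zero he]
    simp [DegLeZ, coeffZ]
  push Not at hd he
  constructor
  · intro m hm
    apply Polynomial.coeff_eq_zero_of_natDegree_lt
    have h1 := Polynomial.natDegree_mul_le (p := p) (q := q)
    have h2 := hp.natDegree_le
    have h3 := hq.natDegree_le
    omega
  · have h0 : 0 ≤ d + e := by omega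
    simp only [coeffZ, hd, he, h0, if_true]
    rw [Int.toNat_add hd he]
    exact Polynomial.coeff_mul_add_eq_of_natDegree_le hp.natDegree_le hq.natDegree_le

theorem degLeZ_prod {K : Type*} [Field K] {ι : Type*} (S : Finset ι) (f : ι → K[X]) (d : ι → ℤ)
    (h : ∀ i, DegLeZ (f i) (d i)) :
    DegLeZ (∏ i ∈ S, f i) (∑ i ∈ S, d i) ∧
      coeffZ (∏ i ∈ S, f i) (∑ i ∈ S, d i) = ∏ i ∈ S, coeffZ (f i) (d i) := by
  classical
  induction S using Finset.induction_on with
  | empty =>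
    constructor
    · intro m hm
      simp only [Finset.prod_empty, Finset.sum_empty] at hm ⊢
      rw [Polynomial.coeff_one, if_neg (by omega)]
    · simp [coeffZ]
  | insert a S ha ih =>
    rw [Finset.prod_insert ha, Finset.sum_insert ha, Finset.prod_insert ha, ← ih.2]
    exact (h a).mul ih.1

theorem degZ_of_ne {K : Type*} [Field K] {p : K[X]} (hp : p ≠ 0) :
    degZ p = ((p.natDegree : ℤ) : WithBot ℤ) := by
  rw [degZ, Polynomial.degree_eq_natDegree hp]
  rfl

theorem degLeZ_of_rdeg {K : Type*} [Field K] {n : ℕ} (s : Fin n → ℤ) (v : Fin n → K[X])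
    (t : ℤ) (ht : rdegRow s v = t) (j : Fin n) : DegLeZ (v j) (t - s j) := by
  by_cases hv : v j = 0
  · intro m _
    simp [hv]
  · have h : degZ (v j) + (s j : WithBot ℤ) ≤ rdegRow s v :=
      Finset.le_sup (f := fun j => degZ (v j) + (s j : WithBot ℤ)) (Finset.mem_univ j)
    rw [ht, degZ_of_ne hv, ← WithBot.coe_add, WithBot.coe_le_coe] at h
    intro m hm
    apply Polynomial.coeff_eq_zero_of_natDegree_lt
    omega

theorem coeffZ_sum {K : Type*} [Field K] {ι : Type*} (S : Finset ι) (f : ι → K[X]) (d : ℤ) :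
    coeffZ (∑ i ∈ S, f i) d = ∑ i ∈ S, coeffZ (f i) d := by
  unfold coeffZ
  split_ifs <;> simp

theorem strictMono_piv_eq {n : ℕ} (f : Fin n → Fin n) (hf : StrictMono f) (i : Fin n) :
    f i = i := by
  have : f = id := by
    have h := hf.range_inj strictMono_id
    apply h.1
    rw [(Finite.surjective_of_injective hf.injective).range_eq]
    simp
  rw [this]; rfl

/-- Lemma 3.1: for a square `s`-reduced matrix `P`,
`det(P) ≠ 0` and its leading coefficient is `det(lm_s(P))`; if moreover `P` is
in `s`-weak Popov form, this leading coefficient is the product of the leading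
coefficients of the diagonal entries of `P`. -/
theorem leadingCoeff_det_of_reduced {K : Type*} [Field K] {n : ℕ}
    (s : Fin n → ℤ) (P : Matrix (Fin n) (Fin n) K[X])
    (hred : IsReducedForm s P) :
    P.det ≠ 0 ∧ P.det.leadingCoeff = (lm s P).det ∧
      (IsWeakPopov s P → P.det.leadingCoeff = ∏ i, (P i i).leadingCoeff) := by
  have hdet : (lm s P).det ≠ 0 := by
    have h1 : IsUnit (lm s P) := Matrix.linearIndependent_rows_iff_isUnit.1 hred
    exact ((Matrix.isUnit_iff_isUnit_det _).1 h1).ne_zero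
  have hex : ∀ i, ∃ t : ℤ, rdegRow s (P i) = t := by
    intro i
    cases h : rdegRow s (P i) with
    | coe t => exact ⟨t, rfl⟩
    | bot =>
      exfalso
      apply hred.ne_zero i
      ext j
      simp [lm, rdeg, h]
  choose t ht using hex
  have hlm : ∀ i j, lm s P i j = coeffZ (P i j) (t i - s j) := by
    intro i j
    simp [lm, rdeg, ht]
  have hdeg : ∀ i j, DegLeZ (P i j) (t i - s j) := fun i j => degLeZ_of_rdeg s (P i) (t i) (ht i) j
  set D : ℤ := ∑ i, t i - ∑ i, s i with hD
  have hsum : ∀ σ : Equiv.Perm (Fin n), ∑ i, (t (σ i) - s i) = D := by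
    intro σ
    rw [Finset.sum_sub_distrib, Equiv.sum_comp σ t]
  have hprod := fun σ : Equiv.Perm (Fin n) =>
    degLeZ_prod Finset.univ (fun i => P (σ i) i) (fun i => t (σ i) - s i) (fun i => hdeg _ _)
  simp only [hsum] at hprod
  have hle : DegLeZ P.det D := by
    intro m hm
    rw [Matrix.det_apply, Polynomial.finset_sum_coeff]
    apply Finset.sum_eq_zero
    intro σ _
    rw [Polynomial.coeff_smul, (hprod σ).1 m hm, smul_zero]
  have hco : coeffZ P.det D = (lm s P).det := by
    rw [Matrix.det_apply, Matrix.det_apply, coeffZ_sum]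
    apply Finset.sum_congr rfl
    intro σ _
    have h2 : coeffZ (Equiv.Perm.sign σ • ∏ i, P (σ i) i) D
        = Equiv.Perm.sign σ • coeffZ (∏ i, P (σ i) i) D := by
      unfold coeffZ
      split_ifs
      · rw [Polynomial.coeff_smul]
      · simp
    rw [h2, (hprod σ).2]
    simp only [hlm]
  have hD0 : 0 ≤ D := by
    by_contra h
    apply hdet
    rw [← hco, coeffZ, if_neg h]
  have hco' : P.det.coeff D.toNat = (lm s P).det := by
    rw [← hco, coeffZ, if_pos hD0]
  have hnd : P.det.natDegree = D.toNat :=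
    le_antisymm hle.natDegree_le (Polynomial.le_natDegree_of_ne_zero (by rw [hco']; exact hdet))
  have hlc : P.det.leadingCoeff = (lm s P).det := by
    rw [Polynomial.leadingCoeff, hnd, hco']
  refine ⟨?_, hlc, ?_⟩
  · intro h0
    apply hdet
    rw [← hlc, h0, Polynomial.leadingCoeff_zero]
  rintro ⟨hne, hmono⟩
  have hex : ∀ i, ∃ j : Fin n, piv s (P i) = j := fun i => by
    obtain ⟨j, hj⟩ := WithBot.ne_bot_iff_exists.1 (hne i)
    exact ⟨j, hj.symm⟩
  choose f hf using hex
  have hfm : StrictMono f := by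
    intro a b hab
    have := hmono hab
    simpa [hf] using this
  have hpiv : ∀ i, piv s (P i) = (i : WithBot (Fin n)) := fun i => by
    rw [hf, strictMono_piv_eq f hfm]
  rw [hlc, Matrix.det_of_lowerTriangular]
  · apply Finset.prod_congr rfl
    intro i _
    have hm := Finset.mem_of_max (hpiv i)
    simp only [Finset.mem_filter, Finset.mem_univ, true_and] at hm
    obtain ⟨h0, h1⟩ := hm
    rw [ht, degZ_of_ne h0, ← WithBot.coe_add, WithBot.coe_inj] at h1
    rw [hlm, ← h1]
    simp [coeffZ]
  · intro i j hij
    have hij : i < j := hij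
    rw [hlm]
    by_contra hc
    have hge : 0 ≤ t i - s j := by
      by_contra h
      exact hc (by rw [coeffZ, if_neg h])
    rw [coeffZ, if_pos hge] at hc
    have h0 : P i j ≠ 0 := by
      intro h
      simp [h] at hc
    have h1 := (hdeg i j).natDegree_le
    have h2 := Polynomial.le_natDegree_of_ne_zero hc
    have h3 : degZ (P i j) + (s j : WithBot ℤ) = rdegRow s (P i) := by
      rw [ht, degZ_of_ne h0, ← WithBot.coe_add, WithBot.coe_inj]
      omega
    have h4 : (j : WithBot (Fin n)) ≤ piv s (P i) := by
      unfold piv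
      apply Finset.le_max
      simp [h0, h3]
    rw [hpiv, WithBot.coe_le_coe] at h4
    exact absurd hij (not_lt.2 h4)
end

section
/- Let K be a field, s ∈ ℤ^n, and let P ∈ K[x]^{m×n} be in s-reduced form with t = rdeg_s(P) ∈ ℤ^m nondecreasing. Then: (1) there exists an invertible lower triangular matrix T ∈ K^{m×m} such that T·lm_s(P) is in 0-unordered weak Popov form; (2) for any invertible lower triangular T ∈ K^{m×m} such that T·lm_s(P) is in 0-unordered weak Popov form, the matrix U ∈ K[x]^{m×m} with entries U_{i,j} = T_{i,j} x^{t_i − t_j} has polynomial entries (since T is lower triangular and t is nondecreasing) and is unimodular; moreover rdeg_s(UP) = rdeg_s(P), lm_s(UP) = T·lm_s(P), and UP is in s-unordered weak Popov form. -/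
open Polynomial Matrix

open Classical in
/-- The pivot of a constant row: the last index with nonzero entry. -/
noncomputable def pvC {K : Type*} [Field K] {n : ℕ} (v : Fin n → K) : WithBot (Fin n) :=
  (Finset.univ.filter fun j => v j ≠ 0).max

theorem pvC_eq_coe {K : Type*} [Field K] {n : ℕ} {v : Fin n → K} {j : Fin n}
    (h : pvC v = (j : WithBot (Fin n))) : v j ≠ 0 ∧ ∀ k, j < k → v k = 0 := by
  classical
  unfold pvC at h
  have h1 := Finset.mem_of_max h
  refine ⟨by simpa using h1, fun k hk => ?_⟩
  by_contra hne
  have h2 : k ≤ j := Finset.le_max_of_eq (by simpa using hne) h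
  exact absurd hk (not_lt.mpr h2)

theorem pvC_lt {K : Type*} [Field K] {n : ℕ} {v : Fin n → K} {j : Fin n}
    (h : ∀ k, j ≤ k → v k = 0) : pvC v < (j : WithBot (Fin n)) := by
  classical
  unfold pvC
  rw [Finset.max_eq_sup_withBot, Finset.sup_lt_iff (WithBot.bot_lt_coe j)]
  intro k hk
  have hk' : v k ≠ 0 := by simpa using hk
  rw [WithBot.coe_lt_coe]
  by_contra hc
  exact hk' (h k (not_lt.mp hc))

theorem pvC_eq_bot {K : Type*} [Field K] {n : ℕ} {v : Fin n → K} : pvC v = ⊥ ↔ v = 0 := by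
  classical
  unfold pvC
  rw [Finset.max_eq_bot, Finset.filter_eq_empty_iff]
  simp [funext_iff]

theorem exists_T {K : Type*} [Field K] {m n : ℕ} (L : Matrix (Fin m) (Fin n) K)
    (hL : LinearIndependent K fun i => L i) :
    ∃ T : Matrix (Fin m) (Fin m) K, (∀ i j, i < j → T i j = 0) ∧ IsUnit T.det ∧
      (∀ i, pvC ((T * L) i) ≠ ⊥) ∧ Function.Injective fun i => pvC ((T * L) i) := by
  have key : ∀ i : Fin m, ∃ c : Fin m → K, (c i = 1 ∧ ∀ j, i < j → c j = 0) ∧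
      ∀ d : Fin m → K, (d i = 1 ∧ ∀ j, i < j → d j = 0) →
        ¬ pvC (d ᵥ* L) < pvC (c ᵥ* L) := by
    intro i
    let S : Set (Fin m → K) := {c | c i = 1 ∧ ∀ j, i < j → c j = 0}
    have hS : S.Nonempty := ⟨Pi.single i 1, by simp, fun j hj => by simp [hj.ne']⟩
    obtain ⟨c, hc, hmin⟩ := WellFounded.has_min
      (InvImage.wf (fun c : Fin m → K => pvC (c ᵥ* L)) wellFounded_lt) S hS
    exact ⟨c, hc, fun d hd => hmin d hd⟩
  choose T hT hmin using key
  have hrow : ∀ i, (Matrix.of T * L) i = T i ᵥ* L := fun i => rfl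
  have hnb : ∀ i, pvC (T i ᵥ* L) ≠ ⊥ := by
    intro i h
    rw [pvC_eq_bot] at h
    have h2 := Matrix.vecMul_injective_iff.mpr hL
    have h3 : T i = 0 := h2 (by simpa using h)
    have := (hT i).1
    rw [h3] at this
    simp at this
  have hlt : ∀ i k, k < i → pvC (T i ᵥ* L) ≠ pvC (T k ᵥ* L) := by
    intro i k hki h
    obtain ⟨j, hj⟩ := WithBot.ne_bot_iff_exists.mp (hnb i)
    have hi := pvC_eq_coe hj.symm
    have hk := pvC_eq_coe (h.symm.trans hj.symm)
    refine hmin i (T i - ((T i ᵥ* L) j / (T k ᵥ* L) j) • T k) ⟨?_, ?_⟩ ?_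
    · simp [(hT i).1, (hT k).2 i hki]
    · intro l hl
      simp [(hT i).2 l hl, (hT k).2 l (hki.trans hl)]
    · rw [← hj]
      apply pvC_lt
      intro l hl
      rw [Matrix.sub_vecMul, Matrix.smul_vecMul]
      rcases hl.eq_or_lt with rfl | hl
      · simp [div_mul_cancel₀ _ hk.1]
      · simp [hi.2 l hl, hk.2 l hl]
  refine ⟨Matrix.of T, fun i j hij => (hT i).2 j hij, ?_, fun i => by rw [hrow]; exact hnb i, ?_⟩
  · rw [Matrix.det_of_lowerTriangular (Matrix.of T) (fun i j hij => (hT i).2 j hij)]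
    simp [(hT _).1]
  · intro i k h
    simp only [hrow] at h
    rcases lt_trichotomy i k with hik | hik | hik
    · exact absurd h.symm (hlt k i hik)
    · exact hik
    · exact absurd h (hlt i k hik)

theorem degZ_add_le {K : Type*} [Field K] (p : K[X]) (a d : ℤ) :
    degZ p + (a : WithBot ℤ) ≤ (d : WithBot ℤ) ↔ ∀ k, d - a < k → coeffZ p k = 0 := by
  by_cases hp : p = 0
  · subst hp
    simp [degZ, coeffZ]
  · unfold degZ
    rw [Polynomial.degree_eq_natDegree hp]
    have : (WithBot.map (fun a : ℕ => (a : ℤ)) ((p.natDegree : ℕ) : WithBot ℕ))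
      = ((p.natDegree : ℤ) : WithBot ℤ) := rfl
    rw [this, ← WithBot.coe_add, WithBot.coe_le_coe]
    constructor
    · intro h k hk
      unfold coeffZ
      split_ifs with h0
      · exact Polynomial.coeff_eq_zero_of_natDegree_lt (by omega)
      · rfl
    · intro h
      by_contra hc
      have := h p.natDegree (by omega)
      simp [coeffZ, hp] at this

theorem degZ_add_eq {K : Type*} [Field K] (p : K[X]) (a d : ℤ) :
    degZ p + (a : WithBot ℤ) = (d : WithBot ℤ) ↔
      (∀ k, d - a < k → coeffZ p k = 0) ∧ coeffZ p (d - a) ≠ 0 := by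
  have h1 := degZ_add_le p a d
  have h2 := degZ_add_le p a (d - 1)
  have h3 : degZ p + (a : WithBot ℤ) ≤ ((d - 1 : ℤ) : WithBot ℤ) ↔
      degZ p + (a : WithBot ℤ) < (d : WithBot ℤ) := by
    induction degZ p + (a : WithBot ℤ) using WithBot.recBotCoe with
    | bot => simp
    | coe x => rw [WithBot.coe_le_coe, WithBot.coe_lt_coe]; omega
  rw [eq_iff_le_not_lt, ← h3, h1, h2]
  constructor
  · rintro ⟨ha, hb⟩
    refine ⟨ha, fun h0 => hb fun k hk => ?_⟩
    rcases (show d - a = k ∨ d - a < k by omega) with rfl | h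
    · exact h0
    · exact ha k h
  · rintro ⟨ha, hb⟩
    exact ⟨ha, fun h => hb (h _ (by omega))⟩

theorem rdegRow_le {K : Type*} [Field K] {n : ℕ} (s : Fin n → ℤ) (w : Fin n → K[X]) (d : ℤ) :
    rdegRow s w ≤ (d : WithBot ℤ) ↔ ∀ j k, d - s j < k → coeffZ (w j) k = 0 := by
  unfold rdegRow
  rw [Finset.sup_le_iff]
  simp only [Finset.mem_univ, true_imp_iff, degZ_add_le]

theorem rdegRow_eq {K : Type*} [Field K] {n : ℕ} (s : Fin n → ℤ) (w : Fin n → K[X]) (d : ℤ)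
    (h : ∀ j k, d - s j < k → coeffZ (w j) k = 0) (h' : ∃ j, coeffZ (w j) (d - s j) ≠ 0) :
    rdegRow s w = (d : WithBot ℤ) := by
  apply le_antisymm ((rdegRow_le s w d).mpr h)
  obtain ⟨j, hj⟩ := h'
  rw [← (degZ_add_eq (w j) (s j) d).mpr ⟨h j, hj⟩]
  exact Finset.le_sup (f := fun j => degZ (w j) + (s j : WithBot ℤ)) (Finset.mem_univ j)

theorem piv_eq {K : Type*} [Field K] {n : ℕ} (s : Fin n → ℤ) (w : Fin n → K[X]) (d : ℤ)
    (h : rdegRow s w = (d : WithBot ℤ)) :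
    piv s w = pvC fun j => coeffZ (w j) (d - s j) := by
  classical
  unfold piv pvC
  congr 1
  ext j
  simp only [Finset.mem_filter, Finset.mem_univ, true_and]
  rw [h, degZ_add_eq]
  have := (rdegRow_le s w d).mp h.le j
  constructor
  · rintro ⟨_, _, h⟩
    exact h
  · intro h
    refine ⟨?_, this, h⟩
    intro h0
    simp [h0, coeffZ] at h

theorem piv_C {K : Type*} [Field K] {n : ℕ} (v : Fin n → K) :
    piv (fun _ => (0 : ℤ)) (fun j => Polynomial.C (v j)) = pvC v := by
  by_cases hv : v = 0
  · rw [pvC_eq_bot.mpr hv]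
    subst hv
    simp [piv]
  · have hd : rdegRow (fun _ => (0 : ℤ)) (fun j => Polynomial.C (v j)) = ((0 : ℤ) : WithBot ℤ) := by
      apply rdegRow_eq
      · intro j k hk
        unfold coeffZ
        rw [if_pos (by omega), Polynomial.coeff_C_of_ne_zero (by omega)]
      · obtain ⟨j, hj⟩ := Function.ne_iff.mp hv
        exact ⟨j, by simpa [coeffZ] using hj⟩
    rw [piv_eq _ _ 0 hd]
    simp [coeffZ]

theorem coeffZ_mul {K : Type*} [Field K] (a : K) (e : ℕ) (p : K[X]) (d : ℤ) :
    coeffZ (Polynomial.C a * Polynomial.X ^ e * p) d = a * coeffZ p (d - e) := by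
  unfold coeffZ
  rw [mul_assoc, Polynomial.coeff_C_mul, Polynomial.coeff_X_pow_mul']
  by_cases h : 0 ≤ d
  · by_cases h2 : (e : ℤ) ≤ d
    · rw [if_pos h, if_pos (by omega), if_pos (by omega)]
      congr 2
      omega
    · rw [if_pos h, if_neg (by omega), if_neg (by omega)]
  · rw [if_neg h, if_neg (by omega), mul_zero]

theorem uwp_C {K : Type*} [Field K] {m n : ℕ} (M : Matrix (Fin m) (Fin n) K) :
    IsUWeakPopov (fun _ => (0 : ℤ)) (M.map Polynomial.C) ↔
      (∀ i, pvC (M i) ≠ ⊥) ∧ Function.Injective fun i => pvC (M i) := by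
  have : ∀ i, piv (fun _ => (0 : ℤ)) ((M.map Polynomial.C) i) = pvC (M i) := fun i => piv_C (M i)
  unfold IsUWeakPopov
  simp only [this]

theorem lm_apply {K : Type*} [Field K] {m n : ℕ} (s : Fin n → ℤ)
    (P : Matrix (Fin m) (Fin n) K[X]) (i : Fin m) (d : ℤ)
    (h : rdeg s P i = (d : WithBot ℤ)) (j : Fin n) :
    lm s P i j = coeffZ (P i j) (d - s j) := by
  simp [lm, h]

/-- Lemma 4.1: for `P` in `s`-reduced form with
nondecreasing `s`-row degree `t`, there is an invertible lower triangular
`T ∈ K^{m×m}` with `T·lm_s(P)` in `0`-unordered weak Popov form; and for any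
such `T`, the matrix `U = (T_{i,j} x^{t_i−t_j})_{i,j}` is unimodular,
`rdeg_s(UP) = rdeg_s(P)`, `lm_s(UP) = T·lm_s(P)`, and `UP` is in
`s`-unordered weak Popov form. -/
theorem reduced_to_uweakPopov {K : Type*} [Field K] {m n : ℕ}
    (s : Fin n → ℤ) (P : Matrix (Fin m) (Fin n) K[X]) (hred : IsReducedForm s P)
    (t : Fin m → ℤ) (ht : ∀ i, rdeg s P i = ((t i : ℤ) : WithBot ℤ))
    (htmono : Monotone t) :
    (∃ T : Matrix (Fin m) (Fin m) K, (∀ i j, i < j → T i j = 0) ∧ IsUnit T.det ∧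
        IsUWeakPopov (fun _ => (0 : ℤ)) ((T * lm s P).map Polynomial.C)) ∧
    (∀ T : Matrix (Fin m) (Fin m) K, (∀ i j, i < j → T i j = 0) → IsUnit T.det →
      IsUWeakPopov (fun _ => (0 : ℤ)) ((T * lm s P).map Polynomial.C) →
      let U : Matrix (Fin m) (Fin m) K[X] :=
        Matrix.of fun i j => Polynomial.C (T i j) * Polynomial.X ^ (t i - t j).toNat
      IsUnit U.det ∧ (∀ i, rdeg s (U * P) i = ((t i : ℤ) : WithBot ℤ)) ∧
        lm s (U * P) = T * lm s P ∧ IsUWeakPopov s (U * P)) := by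
  refine ⟨?_, ?_⟩
  · obtain ⟨T, h1, h2, h3⟩ := exists_T (lm s P) hred
    exact ⟨T, h1, h2, (uwp_C _).mpr h3⟩
  · intro T hT hdet hpop U
    rw [uwp_C] at hpop
    have hco : ∀ i j d, coeffZ ((U * P) i j) d
        = ∑ k, T i k * coeffZ (P k j) (d - (t i - t k)) := by
      intro i j d
      rw [Matrix.mul_apply, coeffZ_sum]
      refine Finset.sum_congr rfl fun k _ => ?_
      simp only [U, Matrix.of_apply]
      rw [coeffZ_mul]
      rcases lt_or_ge i k with h | h
      · simp [hT i k h]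
      · rw [Int.toNat_of_nonneg (sub_nonneg.mpr (htmono h))]
    have hlead : ∀ i j, coeffZ ((U * P) i j) (t i - s j) = (T * lm s P) i j := by
      intro i j
      rw [hco, Matrix.mul_apply]
      refine Finset.sum_congr rfl fun k _ => ?_
      rw [lm_apply s P k (t k) (ht k)]
      congr 2
      ring
    have hrd : ∀ i, rdeg s (U * P) i = ((t i : ℤ) : WithBot ℤ) := by
      intro i
      apply rdegRow_eq
      · intro j k hk
        rw [hco]
        refine Finset.sum_eq_zero fun l _ => ?_
        rw [(rdegRow_le s (P l) (t l)).mp (ht l).le j _ (by omega), mul_zero]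
      · have h1 := hpop.1 i
        rw [Ne, pvC_eq_bot] at h1
        obtain ⟨j, hj⟩ := Function.ne_iff.mp h1
        exact ⟨j, by rw [hlead]; exact hj⟩
    have hpiv : ∀ i, piv s ((U * P) i) = pvC ((T * lm s P) i) := by
      intro i
      rw [piv_eq s _ (t i) (hrd i)]
      simp only [hlead]
    refine ⟨?_, hrd, ?_, ?_⟩
    · have : U.det = Polynomial.C T.det := by
        rw [Matrix.det_of_lowerTriangular U (fun i j hij => by
            have : T i j = 0 := hT i j hij
            simp [U, this]),
          Matrix.det_of_lowerTriangular T (fun i j hij => hT i j hij)]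
        simp [U, map_prod]
      rw [this]
      exact hdet.map Polynomial.C
    · ext i j
      rw [lm_apply s _ i (t i) (hrd i), hlead]
    · unfold IsUWeakPopov
      simp only [hpiv]
      exact hpop
end
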